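/- Let n ≥ 1, n/(n+1) < q < p ≤ 1, and c₀ > 0. There is a constant c = c(n,p,q,c₀) > 0 with the following property: for every ball B ⊆ ℝⁿ of radius 1, every compact set E ⊆ cl(B) with H^{n−q}_∞(E) ≥ c₀, every smooth function u : ℝⁿ → ℝ with compact support contained in 2B satisfying u ≥ 1 on E, and every Hajlasz gradient g of u on ℝⁿ, one has ∫_{ℝⁿ} g^p dm ≥ c. -/

import Mathlib

open MeasureTheory Metric Set ENNReal NNReal

noncomputable section

/-- `g` is a Hajlasz gradient of `u` on `U ⊆ ℝⁿ`: `g` is measurable, nonnegative, and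
off a set of measure zero `|u x - u y| ≤ ‖x - y‖ (g x + g y)` for `x, y ∈ U`. -/
def IsHajlaszGradientOn (n : ℕ) (u g : EuclideanSpace ℝ (Fin n) → ℝ)
    (U : Set (EuclideanSpace ℝ (Fin n))) : Prop :=
  Measurable g ∧ (∀ x, 0 ≤ g x) ∧
    ∃ E : Set (EuclideanSpace ℝ (Fin n)), MeasureTheory.volume E = 0 ∧
      ∀ x ∈ U \ E, ∀ y ∈ U \ E, |u x - u y| ≤ ‖x - y‖ * (g x + g y)

/-- The `s`-Hausdorff content `H^s_∞(A)`, defined via countable coverings by balls. -/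
def hContent (n : ℕ) (s : ℝ) (A : Set (EuclideanSpace ℝ (Fin n))) : ℝ≥0∞ :=
  sInf {r : ℝ≥0∞ | ∃ (x : ℕ → EuclideanSpace ℝ (Fin n)) (ρ : ℕ → ℝ),
    (∀ k, 0 < ρ k) ∧ A ⊆ ⋃ k, ball (x k) (ρ k) ∧
    r = ∑' k, ENNReal.ofReal (ρ k ^ s)}

/-!
Fix `x ∈ E` and set `θ = q / p < 1`. Pick points `y k` converging to `x` at the geometric rate
`2⁻ᵏ`, the first of them outside the support of `u`. If `g (y k) ≤ δ 2 ^ (θ k)` for all `k`, then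
telescoping the Hajlasz inequality along the chain bounds `u x` by a geometric series of ratio
`2 ^ (θ - 1) < 1`, which is less than `1` for small `δ`. Hence at some scale `r` the function `g`
exceeds a constant multiple of `r ^ (-θ)` almost everywhere in an annulus of radius `r` about `x`,
so the measure with density `g ^ p` gives `ball x r` mass at least a constant times `r ^ (n - q)`.
A Vitali covering of `E` by such balls compares its content with the total mass of `g ^ p`.
-/

open Filter Topology

theorem hContent_le_tsum_of_denumerable {n : ℕ} {ι : Type*} [Denumerable ι] (s : ℝ)
    {A : Set (EuclideanSpace ℝ (Fin n))} {x : ι → EuclideanSpace ℝ (Fin n)} {ρ : ι → ℝ}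
    (hρ : ∀ i, 0 < ρ i) (hA : A ⊆ ⋃ i, ball (x i) (ρ i)) :
    hContent n s A ≤ ∑' i, ENNReal.ofReal (ρ i ^ s) := by
  let e : ℕ ≃ ι := (Denumerable.eqv ι).symm
  refine sInf_le ⟨x ∘ e, ρ ∘ e, fun k ↦ hρ (e k), hA.trans ?_, ?_⟩
  · exact (e.surjective.iUnion_comp fun i ↦ ball (x i) (ρ i)).ge
  · exact (e.tsum_eq fun i ↦ ENNReal.ofReal (ρ i ^ s)).symm

-- `hContent` only sees covers indexed by `ℕ`, so a possibly finite cover is padded with balls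
-- `ball 0 (ε k ^ s⁻¹)` of arbitrarily small total contribution `∑ ε k`.
theorem hContent_le_tsum {n : ℕ} {ι : Type*} [Countable ι] {s : ℝ} (hs : 0 < s)
    {A : Set (EuclideanSpace ℝ (Fin n))} {x : ι → EuclideanSpace ℝ (Fin n)} {ρ : ι → ℝ}
    (hρ : ∀ i, 0 < ρ i) (hA : A ⊆ ⋃ i, ball (x i) (ρ i)) :
    hContent n s A ≤ ∑' i, ENNReal.ofReal (ρ i ^ s) := by
  refine ENNReal.le_of_forall_pos_le_add fun η hη _ ↦ ?_
  obtain ⟨ε, hε, hε_sum⟩ :=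
    ENNReal.exists_pos_sum_of_countable (ENNReal.coe_ne_zero.2 hη.ne') ℕ
  obtain ⟨_⟩ := nonempty_denumerable (ι ⊕ ℕ)
  let center : ι ⊕ ℕ → EuclideanSpace ℝ (Fin n) := Sum.elim x 0
  let radius : ι ⊕ ℕ → ℝ := Sum.elim ρ fun k ↦ (ε k : ℝ) ^ s⁻¹
  have radius_pos : ∀ i, 0 < radius i :=
    Sum.rec hρ fun k ↦ Real.rpow_pos_of_pos (NNReal.coe_pos.2 (hε k)) _
  have subset_iUnion : A ⊆ ⋃ i, ball (center i) (radius i) :=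
    hA.trans (iUnion_subset fun i ↦ subset_iUnion_of_subset (Sum.inl i) Subset.rfl)
  have radius_rpow : ∀ k, ENNReal.ofReal (((ε k : ℝ) ^ s⁻¹) ^ s) = ε k := fun k ↦ by
    rw [Real.rpow_inv_rpow (ε k).coe_nonneg hs.ne', ENNReal.ofReal_coe_nnreal]
  calc hContent n s A ≤ ∑' i, ENNReal.ofReal (radius i ^ s) :=
        hContent_le_tsum_of_denumerable s radius_pos subset_iUnion
    _ = ∑' i, ENNReal.ofReal (ρ i ^ s) + ∑' k, (ε k : ℝ≥0∞) := by
        rw [Summable.tsum_sum ENNReal.summable ENNReal.summable]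
        simp only [radius, Sum.elim_inl, Sum.elim_inr, radius_rpow]
    _ ≤ ∑' i, ENNReal.ofReal (ρ i ^ s) + η := by gcongr

theorem exists_countable_disjoint_balls_covering_enlargement {X : Type*} [PseudoMetricSpace X]
    [TopologicalSpace.SeparableSpace X] {A : Set X} {r : X → ℝ} {R : ℝ} (hr : ∀ x ∈ A, 0 < r x)
    (hrR : ∀ x ∈ A, r x ≤ R) :
    ∃ v ⊆ A, v.Countable ∧ (v.PairwiseDisjoint fun x ↦ ball x (r x)) ∧
      A ⊆ ⋃ x : v, ball (x : X) (4 * r x) := by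
  obtain ⟨v, hvA, hv_disj, hv_cover⟩ :=
    Vitali.exists_disjoint_subfamily_covering_enlargement_ball A id r R hrR 4 (by norm_num)
  refine ⟨v, hvA, ?_, hv_disj, fun a ha ↦ ?_⟩
  · exact hv_disj.countable_of_isOpen (fun _ _ ↦ isOpen_ball)
      fun x hx ↦ nonempty_ball.2 (hr x (hvA hx))
  · obtain ⟨b, hb, hab⟩ := hv_cover a ha
    exact mem_iUnion.2 ⟨⟨b, hb⟩, hab (mem_ball_self (hr a ha))⟩

theorem mul_hContent_le_measure_univ {n : ℕ} {s R : ℝ} (hs : 0 < s)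
    {A : Set (EuclideanSpace ℝ (Fin n))} (ν : Measure (EuclideanSpace ℝ (Fin n))) {K : ℝ≥0∞}
    (hA : ∀ x ∈ A, ∃ r, 0 < r ∧ r ≤ R ∧ K * ENNReal.ofReal (r ^ s) ≤ ν (ball x r)) :
    K * hContent n s A ≤ ENNReal.ofReal (4 ^ s) * ν univ := by
  choose! r hr hrR hrν using hA
  obtain ⟨v, hvA, hv_count, hv_disj, hv_cover⟩ :=
    exists_countable_disjoint_balls_covering_enlargement hr hrR
  have : Countable v := hv_count.to_subtype
  have hv_pos : ∀ x : v, 0 < r x := fun x ↦ hr x (hvA x.2)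
  have rpow_four_mul : ∀ x : v, ENNReal.ofReal ((4 * r x) ^ s)
      = ENNReal.ofReal (4 ^ s) * ENNReal.ofReal (r x ^ s) := fun x ↦ by
    rw [Real.mul_rpow (by norm_num) (hv_pos x).le, ENNReal.ofReal_mul (by positivity)]
  calc K * hContent n s A
      ≤ K * ∑' x : v, ENNReal.ofReal ((4 * r x) ^ s) := by
        gcongr
        exact hContent_le_tsum hs (fun x ↦ mul_pos (by norm_num) (hv_pos x)) hv_cover
    _ = ENNReal.ofReal (4 ^ s) * ∑' x : v, K * ENNReal.ofReal (r x ^ s) := by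
        simp only [rpow_four_mul, ENNReal.tsum_mul_left, mul_left_comm]
    _ ≤ ENNReal.ofReal (4 ^ s) * ∑' x : v, ν (ball x (r x)) := by
        gcongr with x
        exact hrν x (hvA x.2)
    _ = ENNReal.ofReal (4 ^ s) * ν (⋃ x ∈ v, ball x (r x)) := by
        rw [measure_biUnion hv_count hv_disj fun _ _ ↦ measurableSet_ball]
    _ ≤ ENNReal.ofReal (4 ^ s) * ν univ := by gcongr; exact subset_univ _

section Chain

variable {X : Type*} [PseudoMetricSpace X] {u g : X → ℝ} {x : X}

theorem abs_sub_le_of_geometric_chain {y : ℕ → X} {R δ a : ℝ} (hu : ContinuousAt u x)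
    (hδ : 0 ≤ δ) (ha : 0 ≤ a) (ha_two : a < 2) (hy : ∀ k, dist (y k) x ≤ R / 2 ^ k)
    (hg : ∀ k, g (y k) ≤ δ * a ^ k)
    (hug : ∀ k l, |u (y k) - u (y l)| ≤ dist (y k) (y l) * (g (y k) + g (y l))) :
    |u (y 0) - u x| ≤ 12 * R * δ / (2 - a) := by
  have hR : 0 ≤ R := by simpa using dist_nonneg.trans (hy 0)
  have dist_succ_le : ∀ k, dist (y k) (y (k + 1)) ≤ 2 * R / 2 ^ k := fun k ↦
    calc dist (y k) (y (k + 1)) ≤ dist (y k) x + dist (y (k + 1)) x := dist_triangle_right _ _ _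
      _ ≤ R / 2 ^ k + R / 2 ^ k := by
        gcongr
        · exact hy k
        · exact (hy (k + 1)).trans (by gcongr <;> norm_num)
      _ = 2 * R / 2 ^ k := by ring
  have gradient_succ_le : ∀ k, g (y k) + g (y (k + 1)) ≤ 3 * δ * a ^ k := fun k ↦
    calc g (y k) + g (y (k + 1)) ≤ δ * a ^ k + δ * a ^ (k + 1) := add_le_add (hg k) (hg (k + 1))
      _ = (1 + a) * (δ * a ^ k) := by ring
      _ ≤ 3 * (δ * a ^ k) := by gcongr; linarith
      _ = 3 * δ * a ^ k := by ring
  have step : ∀ k, dist (u (y k)) (u (y (k + 1))) ≤ 6 * R * δ * (a / 2) ^ k := fun k ↦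
    calc |u (y k) - u (y (k + 1))|
        ≤ dist (y k) (y (k + 1)) * (g (y k) + g (y (k + 1))) := hug k (k + 1)
      _ ≤ 2 * R / 2 ^ k * (3 * δ * a ^ k) :=
        mul_le_mul_of_nonneg (dist_succ_le k) (gradient_succ_le k) dist_nonneg (by positivity)
      _ = 6 * R * δ * (a / 2) ^ k := by rw [div_pow]; ring
  have tendsto_y : Tendsto y atTop (𝓝 x) := by
    rw [tendsto_iff_dist_tendsto_zero]
    exact squeeze_zero (fun _ ↦ dist_nonneg) hy
      (tendsto_const_nhds.div_atTop (tendsto_pow_atTop_atTop_of_one_lt one_lt_two))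
  calc |u (y 0) - u x| ≤ 6 * R * δ / (1 - a / 2) :=
        dist_le_of_le_geometric_of_tendsto₀ _ _ (by linarith) step (hu.tendsto.comp tendsto_y)
    _ = 12 * R * δ / (2 - a) := by
        have : 2 - a ≠ 0 := by linarith
        field_simp
        ring

theorem exists_annulus_lt_gradient {N : Set X} {R δ θ : ℝ} (hR : 0 < R) (hδ : 0 ≤ δ)
    (hδR : 12 * R * δ < 2 - 2 ^ θ) (hu : ContinuousAt u x)
    (hug : ∀ y ∉ N, ∀ z ∉ N, |u y - u z| ≤ dist y z * (g y + g z))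
    (hu_zero : ∀ y ∉ ball x (R / 2), u y = 0) (hux : 1 ≤ u x) :
    ∃ r, 0 < r ∧ r ≤ R ∧ ∀ y ∈ ball x r \ ball x (r / 2), y ∉ N → δ * (R / r) ^ θ < g y := by
  by_contra! hcon
  have exists_point : ∀ k : ℕ, ∃ y ∈ ball x (R / 2 ^ k) \ ball x (R / 2 ^ k / 2),
      y ∉ N ∧ g y ≤ δ * ((2 : ℝ) ^ θ) ^ k := fun k ↦ by
    have level_eq : (R / (R / 2 ^ k)) ^ θ = ((2 : ℝ) ^ θ) ^ k := by
      rw [div_div_cancel₀ hR.ne', Real.rpow_pow_comm zero_le_two]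
    simpa only [level_eq] using hcon (R / 2 ^ k) (by positivity)
      (div_le_self hR.le (one_le_pow₀ one_le_two))
  choose y hy_annulus hyN hyg using exists_point
  have hu_start : u (y 0) = 0 := hu_zero _ (by simpa using (hy_annulus 0).2)
  have hθ : (2 : ℝ) ^ θ < 2 := by linarith [show 0 ≤ 12 * R * δ by positivity]
  have hux_le : |u (y 0) - u x| ≤ 12 * R * δ / (2 - 2 ^ θ) :=
    abs_sub_le_of_geometric_chain hu hδ (by positivity) hθ
      (fun k ↦ (mem_ball.1 (hy_annulus k).1).le) hyg fun k l ↦ hug _ (hyN k) _ (hyN l)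
  rw [hu_start, zero_sub, abs_neg] at hux_le
  have : 12 * R * δ / (2 - 2 ^ θ) < 1 := (div_lt_one (by linarith)).2 hδR
  linarith [le_abs_self (u x)]

end Chain

section Haar

variable {F : Type*} [NormedAddCommGroup F] [NormedSpace ℝ F] [FiniteDimensional ℝ F]
  [MeasurableSpace F] [BorelSpace F] (μ : Measure F) [μ.IsAddHaarMeasure]

theorem ofReal_level_rpow_mul_measure_ball (x : F) {R r δ q p : ℝ} (hR : 0 ≤ R) (hr : 0 < r)
    (hδ : 0 ≤ δ) (hp : 0 < p) :
    ENNReal.ofReal (δ * (R / r) ^ (q / p)) ^ p * μ (ball x r)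
      = ENNReal.ofReal (δ ^ p * R ^ q * μ.real (ball 0 1))
        * ENNReal.ofReal (r ^ (Module.finrank ℝ F - q)) := by
  have level_rpow : (δ * (R / r) ^ (q / p)) ^ p = δ ^ p * (R ^ q / r ^ q) := by
    rw [Real.mul_rpow hδ (by positivity), ← Real.rpow_mul (by positivity),
      div_mul_cancel₀ q hp.ne', Real.div_rpow hR hr.le]
  rw [Measure.addHaar_ball_of_pos μ x hr, ← ofReal_measureReal measure_ball_lt_top.ne,
    ENNReal.ofReal_rpow_of_nonneg (by positivity) hp.le, level_rpow,
    ← ENNReal.ofReal_mul (by positivity), ← ENNReal.ofReal_mul (by positivity),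
    ← ENNReal.ofReal_mul (by positivity), Real.rpow_sub hr, Real.rpow_natCast]
  congr 1
  ring

variable [Nontrivial F]

theorem two_mul_measure_half_ball_le (x : F) (r : ℝ) :
    2 * μ (ball x (r / 2)) ≤ μ (ball x r) := by
  have two_le : (2 : ℝ≥0∞) ≤ ENNReal.ofReal (2 ^ Module.finrank ℝ F) := by
    rw [ENNReal.ofReal_pow zero_le_two, ENNReal.ofReal_ofNat]
    exact le_self_pow₀ one_le_two Module.finrank_pos.ne'
  calc 2 * μ (ball x (r / 2)) ≤ ENNReal.ofReal (2 ^ Module.finrank ℝ F) * μ (ball x (r / 2)) := by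
        gcongr
    _ = ENNReal.ofReal (2 ^ Module.finrank ℝ F) * μ (ball 0 (r / 2)) := by
        rw [Measure.addHaar_ball_center]
    _ = μ (ball x (2 * (r / 2))) := (Measure.addHaar_ball_mul μ x zero_le_two (r / 2)).symm
    _ = μ (ball x r) := by rw [mul_div_cancel₀ r two_ne_zero]

theorem measure_ball_le_two_mul_measure_annulus (x : F) (r : ℝ) :
    μ (ball x r) ≤ 2 * μ (ball x r \ ball x (r / 2)) := by
  have inner_le : μ (ball x (r / 2)) ≤ μ (ball x r \ ball x (r / 2)) := by
    refine (ENNReal.le_sub_of_add_le_right measure_ball_lt_top.ne ?_).trans le_measure_sdiff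
    rw [← two_mul]
    exact two_mul_measure_half_ball_le μ x r
  calc μ (ball x r) ≤ μ (ball x r ∩ ball x (r / 2)) + μ (ball x r \ ball x (r / 2)) :=
        measure_le_inter_add_sdiff μ _ _
    _ ≤ 2 * μ (ball x r \ ball x (r / 2)) := by
        rw [two_mul]
        exact add_le_add_left ((measure_mono inter_subset_right).trans inner_le) _

theorem mul_measure_ball_le_two_mul_setLIntegral {f : F → ℝ≥0∞} {c : ℝ≥0∞} (x : F) {r : ℝ}
    (hf : ∀ᵐ y ∂μ, y ∈ ball x r \ ball x (r / 2) → c ≤ f y) :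
    c * μ (ball x r) ≤ 2 * ∫⁻ y in ball x r, f y ∂μ :=
  calc c * μ (ball x r) ≤ 2 * (c * μ (ball x r \ ball x (r / 2))) := by
        rw [mul_left_comm]
        gcongr
        exact measure_ball_le_two_mul_measure_annulus μ x r
    _ = 2 * ∫⁻ _ in ball x r \ ball x (r / 2), c ∂μ := by rw [setLIntegral_const]
    _ ≤ 2 * ∫⁻ y in ball x r \ ball x (r / 2), f y ∂μ := by
        gcongr 2 * ?_
        exact setLIntegral_mono_ae' (measurableSet_ball.diff measurableSet_ball) hf
    _ ≤ 2 * ∫⁻ y in ball x r, f y ∂μ := by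
        gcongr 2 * ?_
        exact lintegral_mono_set sdiff_subset

theorem exists_rpow_le_two_mul_setLIntegral_gradient {u g : F → ℝ} {N : Set F} {x : F}
    {R δ q p : ℝ} (hR : 0 < R) (hδ : 0 ≤ δ) (hp : 0 < p) (hδR : 12 * R * δ < 2 - 2 ^ (q / p))
    (hu : ContinuousAt u x) (hN : μ N = 0)
    (hug : ∀ y ∉ N, ∀ z ∉ N, |u y - u z| ≤ dist y z * (g y + g z))
    (hu_zero : ∀ y ∉ ball x (R / 2), u y = 0) (hux : 1 ≤ u x) :
    ∃ r, 0 < r ∧ r ≤ R ∧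
      ENNReal.ofReal (δ ^ p * R ^ q * μ.real (ball 0 1))
          * ENNReal.ofReal (r ^ (Module.finrank ℝ F - q))
        ≤ 2 * ∫⁻ y in ball x r, ENNReal.ofReal (g y) ^ p ∂μ := by
  obtain ⟨r, hr, hrR, lt_gradient⟩ := exists_annulus_lt_gradient hR hδ hδR hu hug hu_zero hux
  refine ⟨r, hr, hrR, ?_⟩
  rw [← ofReal_level_rpow_mul_measure_ball μ x hR.le hr hδ hp]
  refine mul_measure_ball_le_two_mul_setLIntegral μ x ?_
  filter_upwards [measure_eq_zero_iff_ae_notMem.1 hN] with y hyN hy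
  gcongr
  exact (lt_gradient y hy hyN).le

end Haar

theorem mul_hContent_le_lintegral_gradient {n : ℕ} [NeZero n] {R δ q p : ℝ} (hR : 0 < R)
    (hδ : 0 ≤ δ) (hp : 0 < p) (hqn : q < n) (hδR : 12 * R * δ < 2 - 2 ^ (q / p))
    {E : Set (EuclideanSpace ℝ (Fin n))} {u g : EuclideanSpace ℝ (Fin n) → ℝ}
    (hu : ∀ x ∈ E, ContinuousAt u x) (hu_zero : ∀ x ∈ E, ∀ y ∉ ball x (R / 2), u y = 0)
    (huE : ∀ x ∈ E, 1 ≤ u x) (hg : IsHajlaszGradientOn n u g univ) :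
    ENNReal.ofReal (δ ^ p * R ^ q * volume.real (ball (0 : EuclideanSpace ℝ (Fin n)) 1))
        * hContent n (n - q) E
      ≤ ENNReal.ofReal (4 ^ (n - q)) * (2 * ∫⁻ x, ENNReal.ofReal (g x) ^ p) := by
  obtain ⟨-, -, N, hN, hug⟩ := hg
  have hug_dist : ∀ y ∉ N, ∀ z ∉ N, |u y - u z| ≤ dist y z * (g y + g z) := fun y hy z hz ↦
    dist_eq_norm y z ▸ hug y ⟨mem_univ y, hy⟩ z ⟨mem_univ z, hz⟩
  let ν := (2 : ℝ≥0∞) • volume.withDensity fun x ↦ ENNReal.ofReal (g x) ^ p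
  have ν_apply : ∀ {s}, MeasurableSet s → ν s = 2 * ∫⁻ x in s, ENNReal.ofReal (g x) ^ p :=
    fun hs ↦ by rw [Measure.smul_apply, withDensity_apply _ hs, smul_eq_mul]
  have exists_ball : ∀ x ∈ E, ∃ r, 0 < r ∧ r ≤ R ∧
      ENNReal.ofReal (δ ^ p * R ^ q * volume.real (ball (0 : EuclideanSpace ℝ (Fin n)) 1))
        * ENNReal.ofReal (r ^ (n - q)) ≤ ν (ball x r) := fun x hx ↦ by
    simpa only [ν_apply measurableSet_ball, finrank_euclideanSpace_fin] using
      exists_rpow_le_two_mul_setLIntegral_gradient volume hR hδ hp hδR (hu x hx) hN hug_dist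
        (hu_zero x hx) (huE x hx)
  simpa only [ν_apply MeasurableSet.univ, setLIntegral_univ] using
    mul_hContent_le_measure_univ (sub_pos.2 hqn) ν exists_ball

theorem content_forces_gradient_mass_general {n : ℕ} {q p R : ℝ} (hq : 0 < q) (hqn : q < n)
    (hqp : q < p) (hR : 0 < R) :
    ∃ c : ℝ, 0 < c ∧
      ∀ (x₀ : EuclideanSpace ℝ (Fin n)) (E : Set (EuclideanSpace ℝ (Fin n))),
        E ⊆ closedBall x₀ R →
        ∀ u : EuclideanSpace ℝ (Fin n) → ℝ,
          Continuous u → Function.support u ⊆ ball x₀ (2 * R) → (∀ x ∈ E, 1 ≤ u x) →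
          ∀ g : EuclideanSpace ℝ (Fin n) → ℝ, IsHajlaszGradientOn n u g univ →
            ENNReal.ofReal c * hContent n (n - q) E ≤ ∫⁻ x, ENNReal.ofReal (g x) ^ p := by
  have hp : 0 < p := hq.trans hqp
  have : NeZero n := .of_pos (Nat.cast_pos.1 (hq.trans hqn))
  have hθ : (2 : ℝ) ^ (q / p) < 2 :=
    Real.rpow_lt_self_of_one_lt one_lt_two ((div_lt_one hp).2 hqp)
  obtain ⟨δ, hδ, hδR⟩ : ∃ δ, 0 < δ ∧ 12 * (6 * R) * δ < 2 - 2 ^ (q / p) :=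
    exists_pos_mul_lt (sub_pos.2 hθ) _
  let K : ℝ := δ ^ p * (6 * R) ^ q * volume.real (ball (0 : EuclideanSpace ℝ (Fin n)) 1)
  have hK : 0 < K := mul_pos (by positivity)
    (ENNReal.toReal_pos (measure_ball_pos _ _ one_pos).ne' measure_ball_lt_top.ne)
  refine ⟨K / (4 ^ (n - q) * 2), by positivity, fun x₀ E hE u hu hu_supp huE g hg ↦ ?_⟩
  have hu_zero : ∀ x ∈ E, ∀ y ∉ ball x (6 * R / 2), u y = 0 := fun x hx y hy ↦ by
    refine Function.notMem_support.1 fun hy_supp ↦ hy (mem_ball.2 ?_)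
    linarith [mem_ball.1 (hu_supp hy_supp), mem_closedBall.1 (hE hx), dist_triangle_right y x x₀]
  have hcontent := mul_hContent_le_lintegral_gradient (by positivity) hδ.le hp hqn hδR
    (fun _ _ ↦ hu.continuousAt) hu_zero huE hg
  rw [ENNReal.ofReal_div_of_pos (by positivity), ← ENNReal.mul_div_right_comm,
    ENNReal.ofReal_mul (p := 4 ^ (n - q)) (by positivity), ENNReal.ofReal_ofNat]
  exact ENNReal.div_le_of_le_mul' (by rwa [mul_assoc])

/-- **Quantitative claim in the proof of Theorem 4.4 (ii).** If `E ⊆ cl(B)` is compact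
with `H^{n-q}_∞(E) ≥ c₀` (`B` a ball of radius `1`) and `u` is smooth, compactly
supported in `2B` and `u ≥ 1` on `E`, then every Hajlasz gradient `g` of `u` satisfies
`∫ g^p ≥ c > 0`. -/
theorem content_forces_gradient_mass
    (n : ℕ) (hn : 1 ≤ n) (q p : ℝ) (hq : (n : ℝ) / (n + 1) < q) (hqp : q < p)
    (hp : p ≤ 1) (c₀ : ℝ) (hc₀ : 0 < c₀) :
    ∃ c : ℝ, 0 < c ∧
      ∀ (x₀ : EuclideanSpace ℝ (Fin n)) (E : Set (EuclideanSpace ℝ (Fin n))),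
        IsCompact E → E ⊆ closedBall x₀ 1 →
        ENNReal.ofReal c₀ ≤ hContent n ((n : ℝ) - q) E →
        ∀ u : EuclideanSpace ℝ (Fin n) → ℝ,
          ContDiff ℝ (⊤ : ℕ∞) u → HasCompactSupport u → tsupport u ⊆ ball x₀ 2 →
          (∀ x ∈ E, 1 ≤ u x) →
          ∀ g : EuclideanSpace ℝ (Fin n) → ℝ, IsHajlaszGradientOn n u g univ →
            ENNReal.ofReal c ≤ ∫⁻ x, ENNReal.ofReal (g x) ^ p := by
  have hq_pos : 0 < q := lt_of_le_of_lt (by positivity) hq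
  have hqn : q < n := (hqp.trans_le hp).trans_le (Nat.one_le_cast.2 hn)
  obtain ⟨c, hc, hmass⟩ := content_forces_gradient_mass_general hq_pos hqn hqp one_pos
  refine ⟨c * c₀, mul_pos hc hc₀, fun x₀ E _ hE hcontent u hu _ hu_supp huE g hg ↦ ?_⟩
  rw [ENNReal.ofReal_mul hc.le]
  exact (mul_le_mul_right hcontent _).trans <| hmass x₀ E hE u hu.continuous
    ((subset_tsupport u).trans (by simpa using hu_supp)) huE g hg
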